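/- arXiv:1307.5088 — 2 statements merged into one kernel-verified Lean document; each statement's English description precedes it below -/
import Mathlib

section
/- If f is holomorphic in the unit disc D and belongs to the Hardy space H^1 (i.e. its nontangential maximal function is in L^1 of the circle), then there exists a constant C > 0 such that for all λ > 0, the Lebesgue area of the set {z ∈ D : |f(z)| > λ(1−|z|)} is at most C/λ. -/
open MeasureTheory Real Set Filter

noncomputable section

/-!
Let `μ` be the measure `‖f‖ dθ` on a circle `‖w‖ = R < 1`, and write `d = R - ‖z‖`. The bound
`2Rd / ‖w - z‖²` for the Poisson kernel shows that `‖f z‖ > t(1 - ‖z‖)` forces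
`∫ ‖w - z‖⁻² dμ(w) > πt`. Cutting this integral dyadically at the scales `2^j d`, some ball of
radius `2^(j+1) d` around `z` must have mass at least a constant times `t 3^j d²`. For fixed `j`,
choose a disjoint Vitali subfamily of these balls. Its enlargements need only cover points of
depth at most `2d`, and such an annulus meets a ball of radius `s` in area `O(sd)` rather than
`O(s²)`. The exceptional set at scale `j` therefore has area at most a constant times
`(2/3)^j μ(ℂ) / t`. The base `3` makes both the areas (`3 > 2`) and the dyadic integral (`3 < 4`)
summable. The estimate is uniform in `R`, so `R → 1` concludes.
-/

open Metric InnerProductSpace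
open scoped ENNReal

section PolarCoordinates

lemma norm_mul_abs_arg_le (z : ℂ) {b : ℝ} (hb : 0 ≤ b) : ‖z‖ * |z.arg| ≤ π * ‖z - b‖ := by
  rcases eq_or_ne z 0 with rfl | hz
  · simpa using mul_nonneg pi_nonneg (abs_nonneg b)
  have hz' : ‖z‖ ≠ 0 := norm_ne_zero_iff.2 hz
  have chord : ‖z‖ * ‖z / ‖z‖ - 1‖ = ‖z - ‖z‖‖ := by
    calc ‖z‖ * ‖z / ‖z‖ - 1‖ = ‖(‖z‖ : ℂ) * (z / ‖z‖ - 1)‖ := by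
          rw [norm_mul, Complex.norm_real, norm_norm]
      _ = ‖z - ‖z‖‖ := by
          rw [mul_sub, mul_div_cancel₀ z (Complex.ofReal_ne_zero.2 hz'), mul_one]
  have arc : |z.arg| ≤ π / 2 * ‖z / ‖z‖ - 1‖ := by
    have hu : z / ‖z‖ ≠ 0 := div_ne_zero hz (Complex.ofReal_ne_zero.2 hz')
    have := Complex.angle_le_mul_norm_sub (x := z / ‖z‖) (y := 1) (by simp [hz']) norm_one
    rwa [Complex.angle_one_right hu, div_eq_inv_mul, ← Complex.ofReal_inv,
      Complex.arg_real_mul z (inv_pos.2 (norm_pos_iff.2 hz)), Complex.ofReal_inv,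
      ← div_eq_inv_mul] at this
  have radial : ‖(b : ℂ) - ‖z‖‖ ≤ ‖z - b‖ := by
    rw [← Complex.ofReal_sub, Complex.norm_real, Real.norm_eq_abs]
    simpa [abs_of_nonneg hb, norm_sub_rev] using abs_norm_sub_norm_le (b : ℂ) z
  calc ‖z‖ * |z.arg| ≤ ‖z‖ * (π / 2 * ‖z / ‖z‖ - 1‖) := by gcongr
    _ = π / 2 * ‖z - ‖z‖‖ := by rw [← chord]; ring
    _ ≤ π / 2 * (‖z - b‖ + ‖(b : ℂ) - ‖z‖‖) := by
        gcongr; exact norm_sub_le_norm_sub_add_norm_sub ..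
    _ ≤ π * ‖z - b‖ := by nlinarith [pi_pos]

lemma volume_eq_lintegral_polarCoord {S : Set ℂ} (hS : MeasurableSet S) :
    volume S = ∫⁻ r in Ioi (0 : ℝ), ENNReal.ofReal r *
      volume {θ ∈ Ioo (-π) π | Complex.polarCoord.symm (r, θ) ∈ S} := by
  have hpolar : Measurable Complex.polarCoord.symm := by
    rw [show ⇑Complex.polarCoord.symm = _ from funext Complex.polarCoord_symm_apply]
    fun_prop
  rw [← lintegral_indicator_one hS, ← Complex.lintegral_comp_polarCoord_symm,
    polarCoord_target, Measure.volume_eq_prod, ← Measure.prod_restrict, lintegral_prod]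
  · refine lintegral_congr fun r => ?_
    simp only [smul_eq_mul]
    rw [lintegral_const_mul' _ _ ENNReal.ofReal_ne_top]
    congr 1
    have hslice : MeasurableSet {θ | Complex.polarCoord.symm (r, θ) ∈ S} :=
      (hpolar.comp measurable_prodMk_left) hS
    calc _ = ∫⁻ θ in Ioo (-π) π,
            {θ | Complex.polarCoord.symm (r, θ) ∈ S}.indicator 1 θ := rfl
      _ = volume ({θ | Complex.polarCoord.symm (r, θ) ∈ S} ∩ Ioo (-π) π) := by
          rw [lintegral_indicator_one hslice, Measure.restrict_apply hslice]
      _ = _ := by rw [inter_comm]; rfl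
  · exact ((ENNReal.measurable_ofReal.comp measurable_fst).mul
      ((measurable_one.indicator hS).comp hpolar)).aemeasurable

lemma ofReal_mul_volume_setOf_norm_polarCoord_symm_sub_le {r s b : ℝ} (hr : 0 < r) (hb : 0 ≤ b) :
    ENNReal.ofReal r * volume {θ ∈ Ioo (-π) π | ‖Complex.polarCoord.symm (r, θ) - b‖ ≤ s} ≤
      ENNReal.ofReal (2 * π * s) := by
  have hsub : {θ ∈ Ioo (-π) π | ‖Complex.polarCoord.symm (r, θ) - b‖ ≤ s} ⊆
      Icc (-(π * s / r)) (π * s / r) := by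
    rintro θ ⟨hθ, hθs⟩
    have harg : (Complex.polarCoord.symm (r, θ)).arg = θ := by
      rw [Complex.polarCoord_symm_apply, Complex.ofReal_cos, Complex.ofReal_sin]
      exact Complex.arg_mul_cos_add_sin_mul_I hr (Ioo_subset_Ioc_self hθ)
    have hchord := norm_mul_abs_arg_le (Complex.polarCoord.symm (r, θ)) hb
    rw [Complex.norm_polarCoord_symm, abs_of_pos hr, harg] at hchord
    rw [mem_Icc, ← abs_le, le_div_iff₀' hr]
    exact hchord.trans (by gcongr)
  calc ENNReal.ofReal r * volume _
      ≤ ENNReal.ofReal r * volume (Icc (-(π * s / r)) (π * s / r)) := by gcongr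
    _ = ENNReal.ofReal (2 * π * s) := by
      rw [Real.volume_Icc, ← ENNReal.ofReal_mul hr.le]
      congr 1
      field_simp
      ring

lemma volume_annulus_inter_closedBall_ofReal_le {a R s b : ℝ} (hs : 0 ≤ s) (hb : 0 ≤ b) :
    volume {z : ℂ | ‖z‖ ∈ Icc a R ∧ ‖z - b‖ ≤ s} ≤ ENNReal.ofReal (2 * π * s * (R - a)) := by
  have hclosed : IsClosed {z : ℂ | ‖z‖ ∈ Icc a R ∧ ‖z - b‖ ≤ s} :=
    (isClosed_Icc.preimage continuous_norm).inter
      (isClosed_le (continuous_id.sub continuous_const).norm continuous_const)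
  rw [volume_eq_lintegral_polarCoord hclosed.measurableSet]
  have slice_le : ∀ r ∈ Ioi (0 : ℝ), ENNReal.ofReal r * volume {θ ∈ Ioo (-π) π |
      Complex.polarCoord.symm (r, θ) ∈ {z : ℂ | ‖z‖ ∈ Icc a R ∧ ‖z - b‖ ≤ s}} ≤
        (Icc a R).indicator (fun _ => ENNReal.ofReal (2 * π * s)) r := by
    intro r (hr : 0 < r)
    simp only [mem_ofPred_eq, Complex.norm_polarCoord_symm, abs_of_pos hr]
    by_cases hrI : r ∈ Icc a R
    · simpa only [hrI, true_and, indicator_of_mem] using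
        ofReal_mul_volume_setOf_norm_polarCoord_symm_sub_le hr hb
    · simp [hrI]
  calc _ ≤ ∫⁻ r in Ioi 0, (Icc a R).indicator (fun _ => ENNReal.ofReal (2 * π * s)) r :=
        setLIntegral_mono' measurableSet_Ioi slice_le
    _ ≤ ∫⁻ r, (Icc a R).indicator (fun _ => ENNReal.ofReal (2 * π * s)) r :=
        setLIntegral_le_lintegral _ _
    _ = ENNReal.ofReal (2 * π * s * (R - a)) := by
        rw [lintegral_indicator_const measurableSet_Icc, Real.volume_Icc,
          ← ENNReal.ofReal_mul (by positivity)]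

lemma volume_annulus_inter_closedBall_le {a R s : ℝ} (hs : 0 ≤ s) (b : ℂ) :
    volume {z : ℂ | ‖z‖ ∈ Icc a R ∧ ‖z - b‖ ≤ s} ≤ ENNReal.ofReal (2 * π * s * (R - a)) := by
  set ρ := rotation (Circle.exp b.arg)
  have hb : ρ ‖b‖ = b := by
    rw [rotation_apply, Circle.coe_exp, mul_comm, Complex.norm_mul_exp_arg_mul_I]
  have hpre : ρ ⁻¹' {z : ℂ | ‖z‖ ∈ Icc a R ∧ ‖z - b‖ ≤ s} =
      {z : ℂ | ‖z‖ ∈ Icc a R ∧ ‖z - (‖b‖ : ℝ)‖ ≤ s} := by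
    ext z
    have : ‖ρ z - b‖ = ‖z - (‖b‖ : ℝ)‖ := by
      rw [← ρ.norm_map (z - (‖b‖ : ℝ)), map_sub, hb]
    simp only [mem_preimage, mem_ofPred_eq, ρ.norm_map, this]
  rw [← ρ.measurePreserving.measure_preimage_emb ρ.toHomeomorph.measurableEmbedding, hpre]
  exact volume_annulus_inter_closedBall_ofReal_le hs (norm_nonneg b)

end PolarCoordinates

section Dyadic

variable {X : Type*} [PseudoMetricSpace X] [MeasurableSpace X] [OpensMeasurableSpace X]
  {μ : Measure X} {z : X} {d : ℝ}

lemma lintegral_inv_edist_sq_le_tsum (hd : 0 < d) (hμ : ∀ᵐ w ∂μ, d ≤ dist w z) :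
    ∫⁻ w, (edist w z ^ 2)⁻¹ ∂μ ≤
      ∑' j : ℕ, (ENNReal.ofReal (2 ^ j * d) ^ 2)⁻¹ * μ (closedBall z (2 ^ (j + 1) * d)) := by
  have hpointwise : ∀ᵐ w ∂μ, (edist w z ^ 2)⁻¹ ≤
      ∑' j : ℕ, (closedBall z (2 ^ (j + 1) * d)).indicator
        (fun _ => (ENNReal.ofReal (2 ^ j * d) ^ 2)⁻¹) w := by
    filter_upwards [hμ] with w hw
    obtain ⟨j, hj, hj'⟩ := exists_nat_pow_near ((one_le_div hd).2 hw) one_lt_two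
    rw [le_div_iff₀ hd] at hj
    rw [div_lt_iff₀ hd] at hj'
    refine le_trans ?_ (ENNReal.le_tsum j)
    rw [indicator_of_mem (mem_closedBall.2 hj'.le), edist_dist]
    gcongr
  refine (lintegral_mono_ae hpointwise).trans_eq ?_
  rw [lintegral_tsum fun j =>
    (measurable_const.indicator isClosed_closedBall.measurableSet).aemeasurable]
  simp only [lintegral_indicator_const isClosed_closedBall.measurableSet]

lemma exists_lt_measure_closedBall_of_lt_lintegral {t : ℝ} (hd : 0 < d) (ht : 0 ≤ t)
    (hμ : ∀ᵐ w ∂μ, d ≤ dist w z) (hlt : ENNReal.ofReal t < ∫⁻ w, (edist w z ^ 2)⁻¹ ∂μ) :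
    ∃ j : ℕ, ENNReal.ofReal (t / 4 * 3 ^ j * d ^ 2) < μ (closedBall z (2 ^ (j + 1) * d)) := by
  by_contra! hle
  refine hlt.not_ge ?_
  have hgeom : HasSum (fun j : ℕ => t / 4 * (3 / 4 : ℝ) ^ j) t := by
    simpa [show (1 - 3 / 4 : ℝ)⁻¹ = 4 by norm_num] using
      (hasSum_geometric_of_lt_one (r := (3 / 4 : ℝ)) (by norm_num) (by norm_num)).mul_left (t / 4)
  calc ∫⁻ w, (edist w z ^ 2)⁻¹ ∂μ
      ≤ ∑' j : ℕ, (ENNReal.ofReal (2 ^ j * d) ^ 2)⁻¹ * μ (closedBall z (2 ^ (j + 1) * d)) :=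
        lintegral_inv_edist_sq_le_tsum hd hμ
    _ ≤ ∑' j : ℕ, ENNReal.ofReal (t / 4 * (3 / 4) ^ j) := by
        refine ENNReal.tsum_le_tsum fun j => ?_
        grw [hle j]
        rw [← ENNReal.ofReal_pow (by positivity), ← ENNReal.ofReal_inv_of_pos (by positivity),
          ← ENNReal.ofReal_mul (by positivity)]
        apply le_of_eq
        congr 1
        rw [div_pow, mul_pow, ← pow_mul, mul_comm j, pow_mul]
        field_simp
        norm_num
        ring
    _ = ENNReal.ofReal t := by
        rw [← ENNReal.ofReal_tsum_of_nonneg (fun j => by positivity) hgeom.summable, hgeom.tsum_eq]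

end Dyadic

section WeakType

variable {μ : Measure ℂ} {R : ℝ}

lemma exists_disjoint_closedBall_cover_annulus {E : Set ℂ} (hE : E ⊆ ball 0 R) {c : ℝ}
    (hc : 0 < c) :
    ∃ u ⊆ E, u.Countable ∧ u.PairwiseDisjoint (fun z => closedBall z (c * (R - ‖z‖))) ∧
      E ⊆ ⋃ b ∈ u, {z : ℂ | ‖z‖ ∈ Icc (R - 2 * (R - ‖b‖)) R ∧
        ‖z - b‖ ≤ 3 * (c * (R - ‖b‖))} := by
  have hpos : ∀ z ∈ E, 0 < c * (R - ‖z‖) := fun z hz =>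
    mul_pos hc (sub_pos.2 (mem_ball_zero_iff.1 (hE hz)))
  obtain ⟨u, huE, hdisj, hcover⟩ := Vitali.exists_disjoint_subfamily_covering_enlargement
    (fun z : ℂ => closedBall z (c * (R - ‖z‖))) E (fun z => c * (R - ‖z‖)) 2 one_lt_two
    (fun z hz => (hpos z hz).le) (c * R) (fun z _ => by gcongr; linarith [norm_nonneg z])
    (fun z hz => nonempty_closedBall.2 (hpos z hz).le)
  refine ⟨u, huE, hdisj.countable_of_nonempty_interior fun z hz => ?_, hdisj, fun z hz => ?_⟩
  · exact ⟨z, ball_subset_interior_closedBall (mem_ball_self (hpos z (huE hz)))⟩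
  · obtain ⟨b, hbu, hmeet, hradius⟩ := hcover z hz
    have hdist := dist_le_add_of_nonempty_closedBall_inter_closedBall hmeet
    have hdepth : R - ‖z‖ ≤ 2 * (R - ‖b‖) := by
      rw [mul_left_comm] at hradius
      exact le_of_mul_le_mul_left hradius hc
    rw [dist_eq_norm] at hdist
    exact mem_biUnion hbu ⟨⟨by linarith, (mem_ball_zero_iff.1 (hE hz)).le⟩, by linarith⟩

lemma volume_setOf_lt_measure_closedBall_le {c k : ℝ} (hc : 0 < c) (hk : 0 < k) :
    volume {z : ℂ | ‖z‖ < R ∧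
        ENNReal.ofReal (k * (R - ‖z‖) ^ 2) < μ (closedBall z (c * (R - ‖z‖)))} ≤
      ENNReal.ofReal (12 * π * c / k) * μ univ := by
  set E := {z : ℂ | ‖z‖ < R ∧
    ENNReal.ofReal (k * (R - ‖z‖) ^ 2) < μ (closedBall z (c * (R - ‖z‖)))}
  obtain ⟨u, huE, hcount, hdisj, hcover⟩ := exists_disjoint_closedBall_cover_annulus
    (E := E) (fun z hz => mem_ball_zero_iff.2 hz.1) hc
  have piece_le : ∀ b ∈ u, volume {z : ℂ | ‖z‖ ∈ Icc (R - 2 * (R - ‖b‖)) R ∧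
      ‖z - b‖ ≤ 3 * (c * (R - ‖b‖))} ≤
        ENNReal.ofReal (12 * π * c / k) * μ (closedBall b (c * (R - ‖b‖))) := by
    intro b hb
    obtain ⟨hbR, hbμ⟩ := huE hb
    have hd : 0 < R - ‖b‖ := sub_pos.2 hbR
    calc _ ≤ ENNReal.ofReal (2 * π * (3 * (c * (R - ‖b‖))) * (R - (R - 2 * (R - ‖b‖)))) :=
          volume_annulus_inter_closedBall_le (by positivity) b
      _ = ENNReal.ofReal (12 * π * c / k) * ENNReal.ofReal (k * (R - ‖b‖) ^ 2) := by
          rw [← ENNReal.ofReal_mul (by positivity)]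
          congr 1
          field_simp
          ring
      _ ≤ _ := by gcongr
  calc volume E
      ≤ ∑' b : u, volume {z : ℂ | ‖z‖ ∈ Icc (R - 2 * (R - ‖(b : ℂ)‖)) R ∧
          ‖z - b‖ ≤ 3 * (c * (R - ‖(b : ℂ)‖))} :=
        (measure_mono hcover).trans (measure_biUnion_le _ hcount _)
    _ ≤ ∑' b : u, ENNReal.ofReal (12 * π * c / k) *
          μ (closedBall (b : ℂ) (c * (R - ‖(b : ℂ)‖))) :=
        ENNReal.tsum_le_tsum fun b => piece_le b b.2
    _ = ENNReal.ofReal (12 * π * c / k) * μ (⋃ b ∈ u, closedBall b (c * (R - ‖b‖))) := by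
        rw [ENNReal.tsum_mul_left,
          measure_biUnion hcount hdisj fun b _ => isClosed_closedBall.measurableSet]
    _ ≤ ENNReal.ofReal (12 * π * c / k) * μ univ := by gcongr; exact subset_univ _

theorem volume_setOf_lt_lintegral_inv_edist_sq_le {t : ℝ} (ht : 0 < t)
    (hμ : ∀ᵐ w ∂μ, R ≤ ‖w‖) :
    volume {z : ℂ | ‖z‖ < R ∧ ENNReal.ofReal t < ∫⁻ w, (edist w z ^ 2)⁻¹ ∂μ} ≤
      ENNReal.ofReal (288 * π / t) * μ univ := by
  have hsub : {z : ℂ | ‖z‖ < R ∧ ENNReal.ofReal t < ∫⁻ w, (edist w z ^ 2)⁻¹ ∂μ} ⊆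
      ⋃ j : ℕ, {z : ℂ | ‖z‖ < R ∧ ENNReal.ofReal (t / 4 * 3 ^ j * (R - ‖z‖) ^ 2) <
        μ (closedBall z (2 ^ (j + 1) * (R - ‖z‖)))} := by
    rintro z ⟨hz, hlt⟩
    have hfar : ∀ᵐ w ∂μ, R - ‖z‖ ≤ dist w z := by
      filter_upwards [hμ] with w hw
      linarith [norm_sub_norm_le w z, dist_eq_norm w z]
    obtain ⟨j, hj⟩ := exists_lt_measure_closedBall_of_lt_lintegral (sub_pos.2 hz) ht.le hfar hlt
    exact mem_iUnion.2 ⟨j, hz, hj⟩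
  have hgeom : HasSum (fun j : ℕ => 96 * π / t * (2 / 3 : ℝ) ^ j) (288 * π / t) := by
    rw [show 288 * π / t = 96 * π / t * (1 - 2 / 3 : ℝ)⁻¹ by ring]
    exact (hasSum_geometric_of_lt_one (by norm_num) (by norm_num)).mul_left _
  calc _ ≤ ∑' j : ℕ, volume {z : ℂ | ‖z‖ < R ∧
          ENNReal.ofReal (t / 4 * 3 ^ j * (R - ‖z‖) ^ 2) <
            μ (closedBall z (2 ^ (j + 1) * (R - ‖z‖)))} :=
        (measure_mono hsub).trans (measure_iUnion_le _)
    _ ≤ ∑' j : ℕ, ENNReal.ofReal (96 * π / t * (2 / 3) ^ j) * μ univ := by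
        refine ENNReal.tsum_le_tsum fun j => ?_
        refine (volume_setOf_lt_measure_closedBall_le (by positivity) (by positivity)).trans_eq ?_
        congr 2
        rw [div_pow, pow_succ]
        field_simp
        norm_num
    _ = ENNReal.ofReal (288 * π / t) * μ univ := by
        rw [ENNReal.tsum_mul_right,
          ← ENNReal.ofReal_tsum_of_nonneg (fun j => by positivity) hgeom.summable, hgeom.tsum_eq]

end WeakType

section Poisson

variable {E : Type*} [NormedAddCommGroup E] {f : ℂ → E} {R : ℝ}

/-- The measure `‖f (R e^{iθ})‖ dθ` on the circle `‖w‖ = |R|`, as a measure on `ℂ`. Its Poisson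
integral dominates `‖f‖` inside the circle when `f` is harmonic. -/
def normCircleMeasure (f : ℂ → E) (R : ℝ) : Measure ℂ :=
  ((volume.restrict (Ico 0 (2 * π))).withDensity fun θ => ‖f (circleMap 0 R θ)‖ₑ).map
    (circleMap 0 R)

lemma normCircleMeasure_univ :
    normCircleMeasure f R univ = ∫⁻ θ in Ico 0 (2 * π), ‖f (circleMap 0 R θ)‖ₑ := by
  rw [normCircleMeasure, Measure.map_apply (measurable_circleMap 0 R) .univ, preimage_univ,
    withDensity_apply _ .univ, Measure.restrict_univ]

lemma ae_norm_eq_normCircleMeasure : ∀ᵐ w ∂normCircleMeasure f R, ‖w‖ = |R| := by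
  rw [normCircleMeasure, ae_map_iff (measurable_circleMap 0 R).aemeasurable
    (measurableSet_eq_fun measurable_norm measurable_const)]
  exact .of_forall fun θ => norm_circleMap_zero R θ

lemma lintegral_normCircleMeasure (hf : ContinuousOn f (sphere 0 |R|)) {g : ℂ → ℝ≥0∞}
    (hg : Measurable g) :
    ∫⁻ w, g w ∂normCircleMeasure f R =
      ∫⁻ θ in Ico 0 (2 * π), ‖f (circleMap 0 R θ)‖ₑ * g (circleMap 0 R θ) := by
  have hdensity : Measurable fun θ => ‖f (circleMap 0 R θ)‖ₑ :=
    (hf.comp_continuous (continuous_circleMap 0 R) (circleMap_mem_sphere' 0 R)).enorm.measurable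
  rw [normCircleMeasure, lintegral_map hg (measurable_circleMap 0 R)]
  exact lintegral_withDensity_eq_lintegral_mul _ hdensity (hg.comp (measurable_circleMap 0 R))

lemma enorm_circleAverage_le [NormedSpace ℝ E] (c : ℂ) :
    ‖circleAverage f c R‖ₑ ≤
      ENNReal.ofReal (2 * π)⁻¹ * ∫⁻ θ in Ico 0 (2 * π), ‖f (circleMap c R θ)‖ₑ := by
  rw [circleAverage, intervalIntegral.integral_of_le two_pi_pos.le, enorm_smul,
    Real.enorm_of_nonneg (by positivity), setLIntegral_congr Ico_ae_eq_Ioc]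
  gcongr
  exact enorm_integral_le_lintegral_enorm _

lemma enorm_poissonKernel_zero_le {z w : ℂ} (hz : ‖z‖ < R) (hw : ‖w‖ = R) :
    ‖poissonKernel 0 z w‖ₑ ≤ ENNReal.ofReal (2 * R * (R - ‖z‖)) * (edist w z ^ 2)⁻¹ := by
  have hwz : 0 < ‖w - z‖ := norm_pos_iff.2 (sub_ne_zero.2 fun h => hz.ne (h ▸ hw))
  have hnum : 0 ≤ R ^ 2 - ‖z‖ ^ 2 := by nlinarith [norm_nonneg z]
  rw [poissonKernel_def, sub_zero, sub_zero, hw, Real.enorm_of_nonneg (by positivity),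
    edist_dist, dist_eq_norm, ← ENNReal.ofReal_pow hwz.le,
    ← ENNReal.ofReal_inv_of_pos (by positivity), ← ENNReal.ofReal_mul' (by positivity),
    div_eq_mul_inv]
  gcongr
  nlinarith [norm_nonneg z]

variable [NormedSpace ℝ E]

/-- The Poisson formula in Mathlib is for real-valued functions; a norming functional at `f z`
reduces to it. -/
lemma enorm_le_lintegral_normCircleMeasure (hf : HarmonicOnNhd f (closedBall 0 R)) {z : ℂ}
    (hz : ‖z‖ < R) :
    ‖f z‖ₑ ≤ ENNReal.ofReal (R * (R - ‖z‖) / π) *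
      ∫⁻ w, (edist w z ^ 2)⁻¹ ∂normCircleMeasure f R := by
  have hR : 0 < R := (norm_nonneg z).trans_lt hz
  obtain ⟨φ, hφ, hφz⟩ := exists_dual_vector'' ℝ (f z)
  have hpoisson : circleAverage (poissonKernel 0 z • (φ ∘ f)) 0 R = ‖f z‖ := by
    rw [(hf.comp_CLM φ).circleAverage_poissonKernel_smul (mem_ball_zero_iff.2 hz)]
    exact hφz
  have hφ_le (w : ℂ) : ‖φ (f w)‖ₑ ≤ ‖f w‖ₑ :=
    enorm_le_iff_norm_le.2 ((φ.le_of_opNorm_le hφ (f w)).trans_eq (one_mul _))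
  have hintegrand (θ : ℝ) : ‖(poissonKernel 0 z • (φ ∘ f)) (circleMap 0 R θ)‖ₑ ≤
      ENNReal.ofReal (2 * R * (R - ‖z‖)) *
        (‖f (circleMap 0 R θ)‖ₑ * (edist (circleMap 0 R θ) z ^ 2)⁻¹) := by
    rw [Pi.smul_apply', enorm_smul, mul_left_comm, mul_comm]
    gcongr
    · exact hφ_le _
    · exact enorm_poissonKernel_zero_le hz ((norm_circleMap_zero R θ).trans (abs_of_pos hR))
  have hcont : ContinuousOn f (sphere 0 |R|) :=
    hf.continuousOn.mono (by rw [abs_of_pos hR]; exact sphere_subset_closedBall)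
  calc ‖f z‖ₑ = ‖circleAverage (poissonKernel 0 z • (φ ∘ f)) 0 R‖ₑ := by
        rw [hpoisson, enorm_norm]
    _ ≤ ENNReal.ofReal (2 * π)⁻¹ * ∫⁻ θ in Ico 0 (2 * π), ENNReal.ofReal (2 * R * (R - ‖z‖)) *
          (‖f (circleMap 0 R θ)‖ₑ * (edist (circleMap 0 R θ) z ^ 2)⁻¹) := by
        grw [enorm_circleAverage_le]
        gcongr with θ
        exact hintegrand θ
    _ = ENNReal.ofReal (R * (R - ‖z‖) / π) *
          ∫⁻ w, (edist w z ^ 2)⁻¹ ∂normCircleMeasure f R := by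
        rw [lintegral_const_mul' _ _ ENNReal.ofReal_ne_top, ← mul_assoc,
          ← ENNReal.ofReal_mul (by positivity), lintegral_normCircleMeasure hcont (by fun_prop)]
        congr 2
        field_simp

lemma volume_ball_inter_setOf_lt_norm_le (hf : HarmonicOnNhd f (closedBall 0 R)) (hR : R ≤ 1)
    {t : ℝ} (ht : 0 < t) :
    volume ({z | t * (1 - ‖z‖) < ‖f z‖} ∩ ball 0 R) ≤
      ENNReal.ofReal (288 / t) * ∫⁻ θ in Ico 0 (2 * π), ‖f (circleMap 0 R θ)‖ₑ := by
  have hsub : {z | t * (1 - ‖z‖) < ‖f z‖} ∩ ball 0 R ⊆ {z | ‖z‖ < R ∧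
      ENNReal.ofReal (π * t) < ∫⁻ w, (edist w z ^ 2)⁻¹ ∂normCircleMeasure f R} := by
    rintro z ⟨hlt : t * (1 - ‖z‖) < ‖f z‖, hz⟩
    rw [mem_ball_zero_iff] at hz
    refine ⟨hz, not_le.1 fun hle => hlt.not_ge ?_⟩
    have hd : 0 < R - ‖z‖ := sub_pos.2 hz
    have hR0 : 0 < R := (norm_nonneg z).trans_lt hz
    have hle' : ‖f z‖ₑ ≤ ENNReal.ofReal (R * (R - ‖z‖) / π * (π * t)) := by
      rw [ENNReal.ofReal_mul (by positivity)]
      exact (enorm_le_lintegral_normCircleMeasure hf hz).trans (by gcongr)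
    rw [← ofReal_norm, ENNReal.ofReal_le_ofReal_iff (by positivity)] at hle'
    calc ‖f z‖ ≤ R * (R - ‖z‖) / π * (π * t) := hle'
      _ = t * (R * (R - ‖z‖)) := by field_simp
      _ ≤ t * (1 - ‖z‖) := by gcongr; nlinarith
  have hμ : ∀ᵐ w ∂normCircleMeasure f R, R ≤ ‖w‖ :=
    ae_norm_eq_normCircleMeasure.mono fun w hw => hw ▸ le_abs_self R
  calc _ ≤ ENNReal.ofReal (288 * π / (π * t)) * normCircleMeasure f R univ :=
        (measure_mono hsub).trans (volume_setOf_lt_lintegral_inv_edist_sq_le (by positivity) hμ)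
    _ = _ := by
        rw [normCircleMeasure_univ, mul_comm π t, mul_div_mul_right _ _ pi_ne_zero]

end Poisson

lemma measure_inter_ball_le_of_forall_lt {X : Type*} [PseudoMetricSpace X] [MeasurableSpace X]
    {μ : Measure X} {S : Set X} {x : X} {R : ℝ} {m : ℝ≥0∞} (hR : 0 < R)
    (h : ∀ r ∈ Ioo 0 R, μ (S ∩ ball x r) ≤ m) : μ (S ∩ ball x R) ≤ m := by
  obtain ⟨r, hr_mono, hr_mem, hr_tendsto⟩ := exists_seq_strictMono_tendsto' hR
  have hmono : Monotone fun n => S ∩ ball x (r n) := fun _ _ hmn =>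
    inter_subset_inter_right S (ball_subset_ball (hr_mono.monotone hmn))
  have hcover : S ∩ ball x R ⊆ ⋃ n, S ∩ ball x (r n) := by
    rintro y ⟨hyS, hyR⟩
    obtain ⟨n, hn⟩ := (hr_tendsto.eventually (lt_mem_nhds (mem_ball.1 hyR))).exists
    exact mem_iUnion.2 ⟨n, hyS, hn⟩
  calc μ (S ∩ ball x R) ≤ μ (⋃ n, S ∩ ball x (r n)) := measure_mono hcover
    _ = ⨆ n, μ (S ∩ ball x (r n)) := hmono.measure_iUnion
    _ ≤ m := iSup_le fun n => h (r n) (hr_mem n)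

theorem volume_setOf_lt_norm_le_of_harmonicOnNhd {E : Type*} [NormedAddCommGroup E]
    [NormedSpace ℝ E] {f : ℂ → E} (hf : HarmonicOnNhd f (ball 0 1)) {M : ℝ≥0∞}
    (hM : ∀ r ∈ Ioo (0 : ℝ) 1, ∫⁻ θ in Ico 0 (2 * π), ‖f (circleMap 0 r θ)‖ₑ ≤ M)
    {t : ℝ} (ht : 0 < t) :
    volume {z ∈ ball (0 : ℂ) 1 | t * (1 - ‖z‖) < ‖f z‖} ≤ ENNReal.ofReal (288 / t) * M := by
  change volume (ball 0 1 ∩ {z | t * (1 - ‖z‖) < ‖f z‖}) ≤ _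
  rw [inter_comm]
  refine measure_inter_ball_le_of_forall_lt one_pos fun r hr => ?_
  grw [volume_ball_inter_setOf_lt_norm_le (hf.mono (closedBall_subset_ball hr.2)) hr.2.le ht,
    hM r hr]

theorem inner_H1_implies_weak_area_bound_general {E : Type*} [NormedAddCommGroup E]
    [NormedSpace ℝ E] {f : ℂ → E} (hf : HarmonicOnNhd f (ball 0 1))
    (hH1 : ∃ Cn : ℝ, ∀ r : ℝ, 0 ≤ r → r < 1 →
      ∫⁻ θ in Ico 0 (2 * π),
        ENNReal.ofReal ‖f (r * Complex.exp (θ * Complex.I))‖ ≤ ENNReal.ofReal Cn) :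
    ∃ C > (0 : ℝ), ∀ lam > (0 : ℝ),
      volume {z ∈ ball (0 : ℂ) 1 | lam * (1 - ‖z‖) < ‖f z‖} ≤ ENNReal.ofReal (C / lam) := by
  obtain ⟨M, hM⟩ := hH1
  refine ⟨288 * max M 1, by positivity, fun lam hlam => ?_⟩
  grw [volume_setOf_lt_norm_le_of_harmonicOnNhd hf (M := ENNReal.ofReal M)
    (fun r hr => by simpa [circleMap] using hM r hr.1.le hr.2) hlam]
  rw [← ENNReal.ofReal_mul (by positivity), div_mul_eq_mul_div]
  gcongr
  exact le_max_left ..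

theorem inner_H1_implies_weak_area_bound (f : ℂ → ℂ)
    (hf : DifferentiableOn ℂ f (Metric.ball 0 1))
    (hH1 : ∃ Cn : ℝ, ∀ r : ℝ, 0 ≤ r → r < 1 →
      (∫⁻ θ in Set.Ico (0:ℝ) (2*π),
          ENNReal.ofReal ‖f ((r:ℂ) * Complex.exp ((θ:ℂ) * Complex.I))‖) ≤ ENNReal.ofReal Cn) :
    ∃ C > (0:ℝ), ∀ lam > (0:ℝ),
      volume {z ∈ Metric.ball (0:ℂ) 1 | lam * (1 - ‖z‖) < ‖f z‖} ≤ ENNReal.ofReal (C / lam) :=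
  inner_H1_implies_weak_area_bound_general
    (fun _ hz => (hf.analyticAt (isOpen_ball.mem_nhds hz)).harmonicAt) hH1
end
end

section
/- Let f be holomorphic in the unit disc D such that (1−|z|)^{−1}|f(z)| belongs to weak L^1 of D with respect to area measure, i.e. there is C > 0 with Area{z ∈ D : |f(z)| > λ(1−|z|)} ≤ C/λ for all λ > 0. Then f belongs to the Hardy space H^p for every 0 < p < 1. -/
open MeasureTheory Real Set Filter

noncomputable section

/-!
For `0 < p` the function `‖f‖ ^ p` is subharmonic, so its mean over the circle of radius `r` is
nondecreasing in `r` and is therefore at most its area average over the annulus `r < ‖z‖ < 1`. On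
this annulus `1 - ‖z‖ < 1 - r`, so the hypothesis gives the weak `L¹` bound
`|{‖f‖ > t}| ≤ C (1 - r) / t` there. Kolmogorov's inequality, valid for `p < 1`, then bounds the
area average by `(C (1 - r) / m) ^ p / (1 - p)`, where `m = π (1 - r ^ 2)` is the area of the
annulus; since `m ≥ π (1 - r)`, this is at most `(C / π) ^ p / (1 - p)`, uniformly in `r`.
-/

open Metric Topology

section CircleAverage

variable {E : Type*} [NormedAddCommGroup E] [NormedSpace ℝ E]

lemma map_circleAverage_le_of_convexOn [CompleteSpace E] {φ : E → ℝ} {s : Set E} {u : ℂ → E}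
    {c : ℂ} {R : ℝ} (hφ : ConvexOn ℝ s φ) (hφc : ContinuousOn φ s) (hs : IsClosed s)
    (hus : ∀ z ∈ sphere c |R|, u z ∈ s) (hu : CircleIntegrable u c R)
    (hφu : CircleIntegrable (fun z ↦ φ (u z)) c R) :
    φ (circleAverage u c R) ≤ circleAverage (fun z ↦ φ (u z)) c R := by
  have huIoc : uIoc 0 (2 * π) = Ioc 0 (2 * π) := uIoc_of_le two_pi_pos.le
  rw [circleAverage_eq_intervalAverage, circleAverage_eq_intervalAverage, huIoc]
  exact hφ.map_set_average_le hφc hs (by simp [pi_pos])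
    measure_Ioc_lt_top.ne
    (ae_of_all _ fun θ ↦ hus _ (circleMap_mem_sphere' c R θ)) hu.1 hφu.1

lemma circleAverage_comp_mul_add (u : ℂ → E) (a b z : ℂ) (s : ℝ) :
    circleAverage (fun w ↦ u (a * w + b)) z s = circleAverage u (a * z + b) (‖a‖ * s) := by
  rw [circleAverage_eq_integral_add (f := u) a.arg, circleAverage_def]
  congr! 4 with θ
  calc a * circleMap z s θ + b
      = a * z + b + a * (s * Complex.exp (θ * Complex.I)) := by
        rw [circleMap]
        ring
    _ = circleMap (a * z + b) (‖a‖ * s) (θ + a.arg) := by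
        nth_rw 2 [← Complex.norm_mul_exp_arg_mul_I a]
        rw [circleMap]
        push_cast
        rw [add_mul, Complex.exp_add]
        ring

lemma circleAverage_norm_sub_sq (c z : ℂ) (s : ℝ) :
    circleAverage (fun w ↦ ‖w - c‖ ^ 2) z s = ‖z - c‖ ^ 2 + s ^ 2 := by
  have hcenter : circleAverage (fun w ↦ w - z) z s = 0 := by
    have hd : Differentiable ℂ fun w ↦ w - z := by fun_prop
    simpa using hd.diffContOnCl.circleAverage (c := z) (R := s)
  have hinner : circleAverage (fun w ↦ inner ℝ (z - c) (w - z)) z s = 0 := by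
    have hcomm := (innerSL ℝ (z - c)).circleAverage_comp_comm
      (f := fun w ↦ w - z) (c := z) (R := s)
      (Continuous.continuousOn (by fun_prop)).circleIntegrable'
    rwa [hcenter, map_zero] at hcomm
  calc circleAverage (fun w ↦ ‖w - c‖ ^ 2) z s
      = circleAverage (fun w ↦ ‖z - c‖ ^ 2 + s ^ 2 + (2 : ℝ) • inner ℝ (z - c) (w - z)) z s := by
        refine circleAverage_congr_sphere fun w hw ↦ ?_
        rw [mem_sphere_iff_norm] at hw
        have hsq := norm_add_sq_real (z - c) (w - z)
        rw [sub_add_sub_cancel', hw, sq_abs] at hsq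
        simp only [hsq, smul_eq_mul]
        ring
    _ = ‖z - c‖ ^ 2 + s ^ 2 := by
        rw [circleAverage_fun_add (circleIntegrable_const ..)
            (Continuous.continuousOn (by fun_prop)).circleIntegrable',
          circleAverage_const, circleAverage_fun_smul, hinner, smul_zero, add_zero]

lemma continuousOn_circleAverage_of_uncurry {X : Type*} [TopologicalSpace X]
    [FirstCountableTopology X] {F : X → ℂ → E} {S : Set X} {c : ℂ} {R : ℝ}
    (hF : ContinuousOn F.uncurry (S ×ˢ sphere c |R|)) :
    ContinuousOn (fun x ↦ circleAverage (F x) c R) S := by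
  rw [continuousOn_iff_continuous_domRestrict]
  have hF' : Continuous (Function.uncurry fun (x : S) (θ : ℝ) ↦ F x (circleMap c R θ)) :=
    hF.comp_continuous (f := fun q : S × ℝ ↦ ((q.1 : X), circleMap c R q.2))
      (by fun_prop) fun q ↦ ⟨q.1.2, circleMap_mem_sphere' ..⟩
  exact Continuous.const_smul
    (intervalIntegral.continuous_parametric_intervalIntegral_of_continuous' hF' _ _) _

lemma circleAverage_comm {F : ℂ → ℂ → E} {c c' : ℂ} {R R' : ℝ}
    (hF : ContinuousOn F.uncurry (sphere c |R| ×ˢ sphere c' |R'|)) :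
    circleAverage (fun z ↦ circleAverage (F z) c' R') c R =
      circleAverage (fun w ↦ circleAverage (fun z ↦ F z w) c R) c' R' := by
  have hF' : Continuous (fun q : ℝ × ℝ ↦ F (circleMap c R q.1) (circleMap c' R' q.2)) :=
    hF.comp_continuous (f := fun q : ℝ × ℝ ↦ (circleMap c R q.1, circleMap c' R' q.2))
      (by fun_prop) fun q ↦ ⟨circleMap_mem_sphere' .., circleMap_mem_sphere' ..⟩
  simp only [circleAverage_def, intervalIntegral.integral_smul]
  rw [intervalIntegral_intervalIntegral_swap
    (F := fun θ φ ↦ F (circleMap c R θ) (circleMap c' R' φ))]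
  exact (hF'.continuousOn.integrableOn_compact (isCompact_uIcc.prod isCompact_uIcc)).mono_set
    (prod_mono uIoc_subset_uIcc uIoc_subset_uIcc)

lemma lintegral_Ioc_circleMap {u : ℂ → ℝ} {c : ℂ} {R : ℝ} (hu : CircleIntegrable u c R)
    (hu0 : ∀ z ∈ sphere c |R|, 0 ≤ u z) (a : ℝ) :
    ∫⁻ θ in Ioc a (a + 2 * π), ENNReal.ofReal (u (circleMap c R θ)) =
      ENNReal.ofReal (2 * π * circleAverage u c R) := by
  have hper : Function.Periodic (fun θ ↦ u (circleMap c R θ)) (2 * π) :=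
    (periodic_circleMap c R).comp u
  have hint : IntervalIntegrable (fun θ ↦ u (circleMap c R θ)) volume a (a + 2 * π) :=
    hper.intervalIntegrable₀ two_pi_pos.ne' hu _ _
  have hmean : ∫ θ in a..(a + 2 * π), u (circleMap c R θ) = 2 * π * circleAverage u c R := by
    rw [hper.intervalIntegral_add_eq a 0, zero_add, circleAverage_def, smul_eq_mul,
      mul_inv_cancel_left₀ two_pi_pos.ne']
  rw [← hmean, intervalIntegral.integral_of_le (by linarith [two_pi_pos]),
    ofReal_integral_eq_lintegral_ofReal hint.1
      (ae_of_all _ fun θ ↦ hu0 _ (circleMap_mem_sphere' c R θ))]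

end CircleAverage

section Analytic

variable {f : ℂ → ℂ} {c : ℂ} {R : ℝ}

lemma log_norm_le_circleAverage_log_norm (hf : AnalyticOnNhd ℂ f (closedBall c |R|))
    (hfc : f c ≠ 0) : log ‖f c‖ ≤ circleAverage (fun z ↦ log ‖f z‖) c R := by
  rcases eq_or_ne R 0 with rfl | hR
  · simp
  rw [hf.circleAverage_log_norm hR hfc, le_add_iff_nonneg_left]
  refine finsum_nonneg fun z ↦ ?_
  by_cases hz : z ∈ closedBall c |R|
  · refine mul_nonneg (mod_cast MeromorphicOn.AnalyticOnNhd.divisor_nonneg hf z) ?_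
    rcases eq_or_ne z c with rfl | hzc
    · simp
    · rw [← log_abs, abs_mul, abs_inv, abs_norm, ← div_eq_mul_inv]
      rw [mem_closedBall', dist_eq_norm] at hz
      exact log_nonneg ((one_le_div (norm_sub_pos_iff.2 hzc.symm)).2 hz)
  · simp [Function.locallyFinsuppWithin.apply_eq_zero_of_notMem _ hz]

lemma norm_rpow_le_circleAverage_norm_rpow (hf : AnalyticOnNhd ℂ f (closedBall c |R|))
    {p : ℝ} (hp : 0 < p) : ‖f c‖ ^ p ≤ circleAverage (fun z ↦ ‖f z‖ ^ p) c R := by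
  rcases eq_or_ne R 0 with rfl | hR
  · simp
  by_cases hfc : f c = 0
  · rw [hfc, norm_zero, zero_rpow hp.ne']
    exact circleAverage_nonneg_of_nonneg fun z _ ↦ by positivity
  have hfs : AnalyticOnNhd ℂ f (sphere c |R|) := hf.mono sphere_subset_closedBall
  have hlog : CircleIntegrable (fun z ↦ p * log ‖f z‖) c R :=
    (hfs.meromorphicOn.circleIntegrable_log_norm).const_mul p
  -- At the zeros of `f` the exponential is `1` because `log 0 = 0`, but those are isolated.
  have hexp : (fun z ↦ ‖f z‖ ^ p) =ᶠ[codiscreteWithin (sphere c |R|)]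
      fun z ↦ exp (p * log ‖f z‖) := by
    have hne := hf.preimage_zero_mem_codiscreteWithin hfc (mem_closedBall_self (abs_nonneg R))
      (isConnected_closedBall (abs_nonneg R))
    filter_upwards [codiscreteWithin_mono sphere_subset_closedBall hne] with z hz
    rw [rpow_def_of_pos (norm_pos_iff.2 hz), mul_comm]
  have hrpow : CircleIntegrable (fun z ↦ ‖f z‖ ^ p) c R :=
    (hfs.continuousOn.norm.rpow_const fun _ _ ↦ Or.inr hp.le).circleIntegrable'
  calc ‖f c‖ ^ p = exp (p * log ‖f c‖) := by
        rw [rpow_def_of_pos (norm_pos_iff.2 hfc), mul_comm]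
    _ ≤ exp (p * circleAverage (fun z ↦ log ‖f z‖) c R) := by
        gcongr
        exact log_norm_le_circleAverage_log_norm hf hfc
    _ = exp (circleAverage (fun z ↦ p * log ‖f z‖) c R) := by
        simp only [← smul_eq_mul, circleAverage_fun_smul]
    _ ≤ circleAverage (fun z ↦ exp (p * log ‖f z‖)) c R :=
        map_circleAverage_le_of_convexOn convexOn_exp continuousOn_exp isClosed_univ
          (fun _ _ ↦ mem_univ _) hlog (hrpow.congr_codiscreteWithin hexp)
    _ = circleAverage (fun z ↦ ‖f z‖ ^ p) c R :=
        (circleAverage_congr_codiscreteWithin hexp hR).symm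

end Analytic

section Subharmonic

/-- A continuous subharmonic function on `U`: a continuous function satisfying the sub-mean value
inequality on every closed disc contained in `U`. Continuity replaces the usual upper
semicontinuity, so that circle averages are averages of integrable functions. -/
structure ContinuousSubharmonicOn (u : ℂ → ℝ) (U : Set ℂ) : Prop where
  continuousOn : ContinuousOn u U
  le_circleAverage : ∀ ⦃z : ℂ⦄ ⦃s : ℝ⦄, 0 < s → closedBall z s ⊆ U → u z ≤ circleAverage u z s

lemma exists_mem_sphere_isMaxOn_of_lt_circleAverage {v : ℂ → ℝ} {c : ℂ} {R : ℝ} (hR : 0 ≤ R)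
    (hv : ContinuousOn v (closedBall c R))
    (hlt : ∀ z ∈ ball c R, v z < circleAverage v z (R - dist z c)) :
    ∃ z ∈ sphere c R, IsMaxOn v (closedBall c R) z := by
  obtain ⟨z, hz, hmax⟩ :=
    (isCompact_closedBall c R).exists_isMaxOn ⟨c, mem_closedBall_self hR⟩ hv
  rcases (mem_closedBall.1 hz).lt_or_eq with hzR | hzR
  · have hsub : sphere z |R - dist z c| ⊆ closedBall c R := by
      rw [abs_of_pos (sub_pos.2 hzR)]
      exact sphere_subset_closedBall.trans (closedBall_subset_closedBall' (by simp))
    exact absurd (hlt z hzR) (circleAverage_mono_on_of_le_circle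
      (hv.mono hsub).circleIntegrable' fun w hw ↦ hmax (hsub hw)).not_gt
  · exact ⟨z, hzR, hmax⟩

namespace ContinuousSubharmonicOn

variable {u : ℂ → ℝ} {U : Set ℂ} {c : ℂ} {R ρ M : ℝ}

lemma norm_rpow {f : ℂ → ℂ} (hf : DifferentiableOn ℂ f U) (hU : IsOpen U) {p : ℝ}
    (hp : 0 < p) : ContinuousSubharmonicOn (fun z ↦ ‖f z‖ ^ p) U where
  continuousOn := hf.continuousOn.norm.rpow_const fun _ _ ↦ Or.inr hp.le
  le_circleAverage z s hs hzs := by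
    refine norm_rpow_le_circleAverage_norm_rpow ?_ hp
    rw [abs_of_pos hs]
    exact (hf.analyticOnNhd hU).mono hzs

theorem le_of_forall_mem_sphere_le (hu : ContinuousSubharmonicOn u U) (hU : closedBall c R ⊆ U)
    (hM : ∀ z ∈ sphere c R, u z ≤ M) {w : ℂ} (hw : w ∈ closedBall c R) : u w ≤ M := by
  have hR : 0 ≤ R := nonempty_closedBall.1 ⟨w, hw⟩
  have hball : ContinuousOn u (closedBall c R) := hu.continuousOn.mono hU
  -- Adding `ε * ‖z - c‖ ^ 2` makes the sub-mean value inequality strict.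
  have hperturbed : ∀ ε > 0, u w ≤ M + ε * R ^ 2 := by
    intro ε hε
    have hsq : Continuous fun z : ℂ ↦ ε • ‖z - c‖ ^ 2 := by fun_prop
    have hstrict : ∀ z ∈ ball c R, u z + ε • ‖z - c‖ ^ 2 <
        circleAverage (fun w ↦ u w + ε • ‖w - c‖ ^ 2) z (R - dist z c) := by
      intro z hz
      have hs : 0 < R - dist z c := sub_pos.2 hz
      have hsub : closedBall z (R - dist z c) ⊆ closedBall c R :=
        closedBall_subset_closedBall' (by simp)
      have hu_int : CircleIntegrable u z (R - dist z c) :=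
        (hball.mono (sphere_subset_closedBall.trans hsub)).circleIntegrable hs.le
      rw [circleAverage_fun_add hu_int hsq.continuousOn.circleIntegrable',
        circleAverage_fun_smul, circleAverage_norm_sub_sq, smul_add, ← add_assoc]
      exact lt_add_of_le_of_pos (add_le_add_left (hu.le_circleAverage hs (hsub.trans hU)) _)
        (by positivity)
    obtain ⟨z, hz, hmax⟩ := exists_mem_sphere_isMaxOn_of_lt_circleAverage hR
      (hball.add hsq.continuousOn) hstrict
    calc u w ≤ u w + ε • ‖w - c‖ ^ 2 := le_add_of_nonneg_right (by positivity)
      _ ≤ u z + ε • ‖z - c‖ ^ 2 := hmax hw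
      _ ≤ M + ε * R ^ 2 := by
        rw [mem_sphere_iff_norm.1 hz, smul_eq_mul]
        gcongr
        exact hM z hz
  have hlim : Tendsto (fun ε : ℝ ↦ M + ε * R ^ 2) (𝓝[>] 0) (𝓝 (M + 0 * R ^ 2)) :=
    (Continuous.tendsto (by fun_prop) 0).mono_left nhdsWithin_le_nhds
  rw [zero_mul, add_zero] at hlim
  exact ge_of_tendsto hlim (eventually_mem_nhdsWithin.mono hperturbed)

lemma comp_mul_add (hu : ContinuousSubharmonicOn u U) {a : ℂ} (ha : a ≠ 0) (b : ℂ) :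
    ContinuousSubharmonicOn (fun z ↦ u (a * z + b)) ((fun z ↦ a * z + b) ⁻¹' U) where
  continuousOn := hu.continuousOn.comp (by fun_prop) (mapsTo_preimage _ _)
  le_circleAverage z s hs hzs := by
    have ha' : 0 < ‖a‖ := norm_pos_iff.2 ha
    rw [circleAverage_comp_mul_add]
    refine hu.le_circleAverage (by positivity) fun w hw ↦ ?_
    have hpre : (w - b) / a ∈ closedBall z s := by
      rw [mem_closedBall_iff_norm] at hw ⊢
      rw [show (w - b) / a - z = (w - (a * z + b)) / a by field_simp; ring, norm_div,
        div_le_iff₀' ha']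
      exact hw
    simpa [mul_div_cancel₀ _ ha] using hzs hpre

lemma circleAverage_uncurry {F : ℂ → ℂ → ℝ} (hF : ContinuousOn F.uncurry (U ×ˢ sphere c |R|))
    (hsub : ∀ ζ ∈ sphere c |R|, ContinuousSubharmonicOn (fun z ↦ F z ζ) U) :
    ContinuousSubharmonicOn (fun z ↦ circleAverage (F z) c R) U where
  continuousOn := continuousOn_circleAverage_of_uncurry hF
  le_circleAverage z s hs hzs := by
    have hsphere : sphere z |s| ⊆ U := by
      rw [abs_of_pos hs]
      exact sphere_subset_closedBall.trans hzs
    have hsph := hF.mono (prod_mono_left hsphere)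
    have hswap : ContinuousOn (fun ζ ↦ circleAverage (fun w ↦ F w ζ) z s) (sphere c |R|) :=
      continuousOn_circleAverage_of_uncurry
        (hsph.comp continuous_swap.continuousOn fun q hq ↦ ⟨hq.2, hq.1⟩)
    have hz : ContinuousOn (F z) (sphere c |R|) :=
      hF.comp (f := fun ζ ↦ (z, ζ)) (by fun_prop)
        fun ζ hζ ↦ ⟨hzs (mem_closedBall_self hs.le), hζ⟩
    calc circleAverage (F z) c R
        ≤ circleAverage (fun ζ ↦ circleAverage (fun w ↦ F w ζ) z s) c R :=
          circleAverage_mono hz.circleIntegrable' hswap.circleIntegrable'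
            fun ζ hζ ↦ (hsub ζ hζ).le_circleAverage hs hzs
      _ = circleAverage (fun w ↦ circleAverage (F w) c R) z s := (circleAverage_comm hsph).symm

theorem circleAverage_norm_sub (hu : ContinuousSubharmonicOn u (ball c ρ)) :
    ContinuousSubharmonicOn (fun z ↦ circleAverage u c ‖z - c‖) (ball c ρ) := by
  have hrot : ∀ ζ ∈ sphere (0 : ℂ) |1|, ball c ρ = (fun z ↦ ζ * z + (c - ζ * c)) ⁻¹' ball c ρ := by
    intro ζ hζ
    ext z
    rw [mem_preimage, mem_ball_iff_norm, mem_ball_iff_norm,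
      show ζ * z + (c - ζ * c) - c = ζ * (z - c) by ring, norm_mul,
      show ‖ζ‖ = 1 by simpa using hζ, one_mul]
  have hmean : ∀ z, circleAverage u c ‖z - c‖ =
      circleAverage (fun ζ ↦ u (ζ * z + (c - ζ * c))) 0 1 := by
    intro z
    have h := circleAverage_comp_mul_add u (z - c) c 0 1
    rw [mul_zero, zero_add, mul_one] at h
    rw [← h]
    congr! 3 with ζ
    ring
  simp only [hmean]
  refine circleAverage_uncurry (hu.continuousOn.comp (by fun_prop) ?_) fun ζ hζ ↦ ?_
  · rintro ⟨z, ζ⟩ ⟨hz, hζ⟩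
    exact (hrot ζ hζ).subset hz
  · have hζ0 : ζ ≠ 0 := ne_zero_of_mem_sphere (by simp) ⟨ζ, hζ⟩
    have h := hu.comp_mul_add hζ0 (c - ζ * c)
    rwa [← hrot ζ hζ] at h

theorem monotoneOn_circleAverage (hu : ContinuousSubharmonicOn u (ball c ρ)) :
    MonotoneOn (circleAverage u c) (Ico 0 ρ) := by
  intro r hr t ht hrt
  have h := hu.circleAverage_norm_sub.le_of_forall_mem_sphere_le (R := t)
    (M := circleAverage u c t) (w := c + r) (closedBall_subset_ball ht.2)
    (fun z hz ↦ by rw [mem_sphere_iff_norm.1 hz])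
    (by simpa [abs_of_nonneg hr.1] using hrt)
  simpa [abs_of_nonneg hr.1] using h

end ContinuousSubharmonicOn

end Subharmonic

section Annulus

variable {c : ℂ} {r ρ : ℝ}

lemma circleMap_mem_ball_sdiff_closedBall {t θ : ℝ} (ht : 0 ≤ t) :
    circleMap c t θ ∈ ball c ρ \ closedBall c r ↔ t ∈ Ioo r ρ := by
  simp [dist_eq_norm, abs_of_nonneg ht, and_comm]

lemma lintegral_ball_sdiff_closedBall {g : ℂ → ENNReal} (hr : 0 ≤ r)
    (hg : ContinuousOn g (ball c ρ \ closedBall c r)) :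
    ∫⁻ z in ball c ρ \ closedBall c r, g z =
      ∫⁻ t in Ioo r ρ, ENNReal.ofReal t * ∫⁻ θ in Ioc (-π) π, g (circleMap c t θ) := by
  have hS : MeasurableSet (Ioo r ρ ×ˢ Ioo (-π) π) := measurableSet_Ioo.prod measurableSet_Ioo
  have hsymm : ∀ q : ℝ × ℝ, c + Complex.polarCoord.symm q = circleMap c q.1 q.2 := fun q ↦ by
    rw [Complex.polarCoord_symm_apply, circleMap, Complex.exp_mul_I]
    push_cast
    rfl
  have hmeas : AEMeasurable (fun q : ℝ × ℝ ↦ ENNReal.ofReal q.1 * g (circleMap c q.1 q.2))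
      (volume.restrict (Ioo r ρ ×ˢ Ioo (-π) π)) :=
    AEMeasurable.mul (by fun_prop) ((hg.comp (by unfold circleMap; fun_prop) fun q hq ↦
      (circleMap_mem_ball_sdiff_closedBall (hr.trans hq.1.1.le)).2 hq.1).aemeasurable hS)
  calc ∫⁻ z in ball c ρ \ closedBall c r, g z
      = ∫⁻ q in polarCoord.target, ENNReal.ofReal q.1 •
          (ball c ρ \ closedBall c r).indicator g (circleMap c q.1 q.2) := by
        rw [← lintegral_indicator (measurableSet_ball.diff measurableSet_closedBall),
          ← lintegral_add_left_eq_self _ c, ← Complex.lintegral_comp_polarCoord_symm]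
        simp only [hsymm]
    _ = ∫⁻ q in polarCoord.target, (Ioo r ρ ×ˢ Ioo (-π) π).indicator
          (fun q ↦ ENNReal.ofReal q.1 * g (circleMap c q.1 q.2)) q := by
        refine setLIntegral_congr_fun polarCoord.open_target.measurableSet fun q hq ↦ ?_
        by_cases hqr : q.1 ∈ Ioo r ρ
        · rw [indicator_of_mem ((circleMap_mem_ball_sdiff_closedBall (le_of_lt hq.1)).2 hqr),
            indicator_of_mem (mem_prod.2 ⟨hqr, hq.2⟩), smul_eq_mul]
        · rw [indicator_of_notMem
              (mt (circleMap_mem_ball_sdiff_closedBall (le_of_lt hq.1)).1 hqr),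
            indicator_of_notMem (fun h : q ∈ Ioo r ρ ×ˢ Ioo (-π) π ↦ hqr h.1), smul_zero]
    _ = ∫⁻ q in Ioo r ρ ×ˢ Ioo (-π) π, ENNReal.ofReal q.1 * g (circleMap c q.1 q.2) := by
        rw [setLIntegral_indicator hS, inter_eq_left.2]
        exact prod_mono_left fun t ht ↦ hr.trans_lt ht.1
    _ = ∫⁻ t in Ioo r ρ, ENNReal.ofReal t * ∫⁻ θ in Ioc (-π) π, g (circleMap c t θ) := by
        rw [Measure.volume_eq_prod] at hmeas ⊢
        rw [setLIntegral_prod _ hmeas]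
        simp only [lintegral_const_mul' _ _ ENNReal.ofReal_ne_top,
          setLIntegral_congr (Ioo_ae_eq_Ioc (a := -π) (b := π))]

lemma volume_ball_sdiff_closedBall (hr : 0 ≤ r) (hrρ : r < ρ) :
    volume (ball c ρ \ closedBall c r) = ENNReal.ofReal (π * (ρ ^ 2 - r ^ 2)) := by
  have hpi : (NNReal.pi : ENNReal) = ENNReal.ofReal π :=
    (ENNReal.ofReal_eq_coe_nnreal pi_pos.le).symm
  rw [measure_sdiff (closedBall_subset_ball hrρ) measurableSet_closedBall.nullMeasurableSet
      measure_closedBall_lt_top.ne, Complex.volume_ball, Complex.volume_closedBall, hpi,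
    ← ENNReal.ofReal_pow (hr.trans hrρ.le), ← ENNReal.ofReal_pow hr,
    ← ENNReal.ofReal_mul (by positivity), ← ENNReal.ofReal_mul (by positivity),
    ← ENNReal.ofReal_sub _ (by positivity), ← sub_mul, mul_comm]

theorem ContinuousSubharmonicOn.ofReal_circleAverage_mul_volume_le {u : ℂ → ℝ}
    (hu : ContinuousSubharmonicOn u (ball c ρ)) (hu0 : ∀ z ∈ ball c ρ, 0 ≤ u z) (hr : 0 ≤ r) :
    ENNReal.ofReal (circleAverage u c r) * volume (ball c ρ \ closedBall c r) ≤
      ∫⁻ z in ball c ρ \ closedBall c r, ENNReal.ofReal (u z) := by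
  have hcircle : ∀ t ∈ Ioo r ρ, ENNReal.ofReal (circleAverage u c r) *
        ∫⁻ _ in Ioc (-π) π, 1 ≤ ∫⁻ θ in Ioc (-π) π, ENNReal.ofReal (u (circleMap c t θ)) := by
    intro t ht
    have ht0 : 0 ≤ t := hr.trans ht.1.le
    have hsub : sphere c |t| ⊆ ball c ρ := by
      rw [abs_of_nonneg ht0]
      exact sphere_subset_closedBall.trans (closedBall_subset_ball ht.2)
    have hmean := lintegral_Ioc_circleMap (hu.continuousOn.mono hsub).circleIntegrable'
      (fun z hz ↦ hu0 z (hsub hz)) (-π)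
    rw [show -π + 2 * π = π by ring] at hmean
    rw [hmean, setLIntegral_one, Real.volume_Ioc, mul_comm, sub_neg_eq_add, ← two_mul,
      ENNReal.ofReal_mul two_pi_pos.le]
    gcongr
    exact hu.monotoneOn_circleAverage ⟨hr, ht.1.trans ht.2⟩ ⟨ht0, ht.2⟩ ht.1.le
  rw [← setLIntegral_one, lintegral_ball_sdiff_closedBall hr continuousOn_const,
    lintegral_ball_sdiff_closedBall hr (g := fun z ↦ ENNReal.ofReal (u z))
      (ENNReal.continuous_ofReal.comp_continuousOn (hu.continuousOn.mono sdiff_subset)),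
    ← lintegral_const_mul' _ _ ENNReal.ofReal_ne_top]
  refine setLIntegral_mono' measurableSet_Ioo fun t ht ↦ ?_
  rw [mul_left_comm]
  gcongr
  exact hcircle t ht

end Annulus

section WeakL1

lemma lintegral_Ioc_rpow {a s : ℝ} (ha : 0 ≤ a) (hs : -1 < s) :
    ∫⁻ t in Ioc 0 a, ENNReal.ofReal (t ^ s) = ENNReal.ofReal (a ^ (s + 1) / (s + 1)) := by
  rw [← ofReal_integral_eq_lintegral_ofReal (intervalIntegral.intervalIntegrable_rpow' hs).1
      ((ae_restrict_mem measurableSet_Ioc).mono fun t ht ↦ rpow_nonneg ht.1.le s),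
    ← intervalIntegral.integral_of_le ha, integral_rpow (Or.inl hs),
    zero_rpow (by linarith), sub_zero]

lemma lintegral_Ioi_rpow {a s : ℝ} (ha : 0 < a) (hs : s < -1) :
    ∫⁻ t in Ioi a, ENNReal.ofReal (t ^ s) = ENNReal.ofReal (-a ^ (s + 1) / (s + 1)) := by
  rw [← ofReal_integral_eq_lintegral_ofReal (integrableOn_Ioi_rpow_of_lt hs ha)
      ((ae_restrict_mem measurableSet_Ioi).mono fun t ht ↦ rpow_nonneg (ha.trans ht).le s),
    integral_Ioi_rpow_of_lt hs ha]

lemma lintegral_Ioi_mul_rpow_le {φ : ℝ → ENNReal} {a C p : ℝ} (hC : 0 ≤ C) (ha : 0 < a)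
    (hp1 : p < 1) (hφ : ∀ t ∈ Ioi a, φ t ≤ ENNReal.ofReal (C / t)) :
    ∫⁻ t in Ioi a, φ t * ENNReal.ofReal (t ^ (p - 1)) ≤
      ENNReal.ofReal (C * (a ^ (p - 1) / (1 - p))) := by
  calc ∫⁻ t in Ioi a, φ t * ENNReal.ofReal (t ^ (p - 1))
      ≤ ∫⁻ t in Ioi a, ENNReal.ofReal C * ENNReal.ofReal (t ^ (p - 2)) := by
        refine setLIntegral_mono' measurableSet_Ioi fun t ht ↦ ?_
        have ht0 : 0 < t := ha.trans ht
        have hsplit : C * t ^ (p - 2) = C / t * t ^ (p - 1) := by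
          rw [show p - 2 = p - 1 - 1 by ring, rpow_sub_one ht0.ne']
          ring
        rw [← ENNReal.ofReal_mul hC, hsplit, ENNReal.ofReal_mul (by positivity)]
        gcongr
        exact hφ t ht
    _ = ENNReal.ofReal (C * (a ^ (p - 1) / (1 - p))) := by
        rw [lintegral_const_mul' _ _ ENNReal.ofReal_ne_top,
          lintegral_Ioi_rpow ha (by linarith), ENNReal.ofReal_mul hC,
          show p - 2 + 1 = -(1 - p) by ring, neg_div_neg_eq, neg_sub]

/-- Kolmogorov's inequality. The layer-cake integral is cut at the height `C / m`, where the bounds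
`m` and `C / t` of the distribution function coincide. -/
theorem lintegral_rpow_le_of_weak_bound {α : Type*} [MeasurableSpace α] {μ : Measure α}
    {f : α → ℝ} (hf0 : 0 ≤ᵐ[μ] f) (hf : AEMeasurable f μ) {C m p : ℝ} (hC : 0 < C) (hm : 0 < m)
    (hp : 0 < p) (hp1 : p < 1) (hμ : μ univ ≤ ENNReal.ofReal m)
    (hweak : ∀ t > 0, μ {x | t < f x} ≤ ENNReal.ofReal (C / t)) :
    ∫⁻ x, ENNReal.ofReal (f x ^ p) ∂μ ≤ ENNReal.ofReal (C ^ p * m ^ (1 - p) / (1 - p)) := by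
  have ha : 0 < C / m := by positivity
  have hq : 0 < 1 - p := sub_pos.2 hp1
  have hlow : ∫⁻ t in Ioc 0 (C / m), μ {x | t < f x} * ENNReal.ofReal (t ^ (p - 1)) ≤
      ENNReal.ofReal (m * ((C / m) ^ p / p)) := by
    calc _ ≤ ∫⁻ t in Ioc 0 (C / m), ENNReal.ofReal m * ENNReal.ofReal (t ^ (p - 1)) := by
          gcongr
          exact (measure_mono (subset_univ _)).trans hμ
      _ = ENNReal.ofReal (m * ((C / m) ^ p / p)) := by
          rw [lintegral_const_mul' _ _ ENNReal.ofReal_ne_top,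
            lintegral_Ioc_rpow ha.le (by linarith), sub_add_cancel, ENNReal.ofReal_mul hm.le]
  have hhigh : ∫⁻ t in Ioi (C / m), μ {x | t < f x} * ENNReal.ofReal (t ^ (p - 1)) ≤
      ENNReal.ofReal (C * ((C / m) ^ (p - 1) / (1 - p))) :=
    lintegral_Ioi_mul_rpow_le hC.le ha hp1 fun t ht ↦ hweak t (ha.trans ht)
  rw [lintegral_rpow_eq_lintegral_meas_lt_mul μ hf0 hf hp, ← Ioc_union_Ioi_eq_Ioi ha.le]
  calc _ ≤ ENNReal.ofReal p * (ENNReal.ofReal (m * ((C / m) ^ p / p)) +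
          ENNReal.ofReal (C * ((C / m) ^ (p - 1) / (1 - p)))) := by
        gcongr
        exact (lintegral_union_le _ _ _).trans (add_le_add hlow hhigh)
    _ = ENNReal.ofReal (C ^ p * m ^ (1 - p) / (1 - p)) := by
        rw [← ENNReal.ofReal_add (by positivity) (by positivity), ← ENNReal.ofReal_mul hp.le,
          rpow_sub_one ha.ne', rpow_sub hm, rpow_one, div_rpow hC.le hm.le]
        congr 1
        field_simp
        ring

end WeakL1

section Hardy

variable {c : ℂ} {r ρ C : ℝ}

lemma volume_restrict_ball_sdiff_closedBall_le {g : ℂ → ℝ} (hrρ : r < ρ)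
    (hweak : ∀ t > 0,
      volume {z ∈ ball c ρ | t * (ρ - dist z c) < g z} ≤ ENNReal.ofReal (C / t))
    {t : ℝ} (ht : 0 < t) :
    volume.restrict (ball c ρ \ closedBall c r) {z | t < g z} ≤
      ENNReal.ofReal (C * (ρ - r) / t) := by
  have hδ : 0 < ρ - r := sub_pos.2 hrρ
  rw [Measure.restrict_apply' (measurableSet_ball.diff measurableSet_closedBall),
    ← div_div_eq_mul_div]
  refine (measure_mono ?_).trans (hweak (t / (ρ - r)) (by positivity))
  rintro z ⟨htz, hzρ, hzr⟩
  rw [mem_closedBall, not_le] at hzr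
  refine ⟨hzρ, lt_of_le_of_lt ?_ htz⟩
  calc t / (ρ - r) * (ρ - dist z c) ≤ t / (ρ - r) * (ρ - r) := by gcongr
    _ = t := div_mul_cancel₀ _ hδ.ne'

lemma lintegral_ball_sdiff_closedBall_rpow_le {g : ℂ → ℝ} {p : ℝ} (hg0 : ∀ z, 0 ≤ g z)
    (hg : AEMeasurable g (volume.restrict (ball c ρ \ closedBall c r))) (hC : 0 < C) (hp : 0 < p)
    (hp1 : p < 1)
    (hweak : ∀ t > 0,
      volume {z ∈ ball c ρ | t * (ρ - dist z c) < g z} ≤ ENNReal.ofReal (C / t))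
    (hr : 0 ≤ r) (hrρ : r < ρ) :
    ∫⁻ z in ball c ρ \ closedBall c r, ENNReal.ofReal (g z ^ p) ≤
      ENNReal.ofReal ((C * (ρ - r)) ^ p * (π * (ρ ^ 2 - r ^ 2)) ^ (1 - p) / (1 - p)) := by
  have hm : 0 < π * (ρ ^ 2 - r ^ 2) := mul_pos pi_pos (sub_pos.2 (by gcongr))
  refine lintegral_rpow_le_of_weak_bound (ae_of_all _ hg0) hg (mul_pos hC (sub_pos.2 hrρ))
    hm hp hp1 ?_ fun t ht ↦ volume_restrict_ball_sdiff_closedBall_le hrρ hweak ht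
  rw [Measure.restrict_apply_univ, volume_ball_sdiff_closedBall hr hrρ]

theorem circleAverage_norm_rpow_le_of_weak_bound {f : ℂ → ℂ} {p : ℝ}
    (hf : DifferentiableOn ℂ f (ball c ρ)) (hC : 0 < C) (hp : 0 < p) (hp1 : p < 1)
    (hweak : ∀ t > 0,
      volume {z ∈ ball c ρ | t * (ρ - dist z c) < ‖f z‖} ≤ ENNReal.ofReal (C / t))
    (hr : 0 ≤ r) (hrρ : r < ρ) :
    circleAverage (fun z ↦ ‖f z‖ ^ p) c r ≤ (C / (π * ρ)) ^ p / (1 - p) := by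
  set m := π * (ρ ^ 2 - r ^ 2) with hm_def
  have hδ : 0 < ρ - r := sub_pos.2 hrρ
  have hρ : 0 < ρ := hr.trans_lt hrρ
  have hq : 0 < 1 - p := sub_pos.2 hp1
  have hm : π * ρ * (ρ - r) ≤ m := by
    rw [hm_def, sq_sub_sq, mul_assoc]
    gcongr
    exact le_add_of_nonneg_right hr
  have hm0 : 0 < m := lt_of_lt_of_le (by positivity) hm
  have hmul : circleAverage (fun z ↦ ‖f z‖ ^ p) c r * m ≤
      (C * (ρ - r)) ^ p * m ^ (1 - p) / (1 - p) := by
    have hlower :=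
      (ContinuousSubharmonicOn.norm_rpow hf isOpen_ball hp).ofReal_circleAverage_mul_volume_le
        (fun z _ ↦ by positivity) hr
    have hupper := lintegral_ball_sdiff_closedBall_rpow_le (fun z ↦ norm_nonneg (f z))
      ((hf.continuousOn.mono sdiff_subset).norm.aemeasurable
        (measurableSet_ball.diff measurableSet_closedBall)) hC hp hp1 hweak hr hrρ
    rw [volume_ball_sdiff_closedBall hr hrρ, ← ENNReal.ofReal_mul' hm0.le] at hlower
    exact (ENNReal.ofReal_le_ofReal_iff (by positivity)).1 (hlower.trans hupper)
  calc circleAverage (fun z ↦ ‖f z‖ ^ p) c r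
      ≤ (C * (ρ - r)) ^ p * m ^ (1 - p) / (1 - p) / m := (le_div_iff₀ hm0).2 hmul
    _ = (C * (ρ - r) / m) ^ p / (1 - p) := by
        rw [rpow_sub hm0, rpow_one, div_rpow (by positivity) hm0.le]
        field_simp
    _ ≤ (C * (ρ - r) / (π * ρ * (ρ - r))) ^ p / (1 - p) := by gcongr
    _ = (C / (π * ρ)) ^ p / (1 - p) := by rw [mul_div_mul_right _ _ hδ.ne']

end Hardy

theorem weak_area_bound_implies_Hp (f : ℂ → ℂ) (C : ℝ) (hC : 0 < C)
    (hf : DifferentiableOn ℂ f (Metric.ball 0 1))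
    (harea : ∀ lam > (0:ℝ),
      volume {z ∈ Metric.ball (0:ℂ) 1 | lam * (1 - ‖z‖) < ‖f z‖} ≤ ENNReal.ofReal (C / lam)) :
    ∀ p : ℝ, 0 < p → p < 1 → ∃ K : ℝ, ∀ r : ℝ, 0 ≤ r → r < 1 →
      (∫⁻ θ in Set.Ico (0:ℝ) (2*π),
          ENNReal.ofReal (‖f ((r:ℂ) * Complex.exp ((θ:ℂ) * Complex.I))‖ ^ p))
        ≤ ENNReal.ofReal K := by
  intro p hp hp1
  refine ⟨2 * π * ((C / π) ^ p / (1 - p)), fun r hr hr1 ↦ ?_⟩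
  have hbound : circleAverage (fun z ↦ ‖f z‖ ^ p) 0 r ≤ (C / π) ^ p / (1 - p) := by
    simpa only [mul_one] using
      circleAverage_norm_rpow_le_of_weak_bound hf hC hp hp1 (by simpa using harea) hr hr1
  have hint : CircleIntegrable (fun z ↦ ‖f z‖ ^ p) 0 r :=
    ((ContinuousSubharmonicOn.norm_rpow hf isOpen_ball hp).continuousOn.mono
      (sphere_subset_closedBall.trans (closedBall_subset_ball hr1))).circleIntegrable hr
  have hmean := lintegral_Ioc_circleMap hint (fun z _ ↦ by positivity) 0
  simp only [zero_add, circleMap_zero] at hmean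
  rw [setLIntegral_congr Ico_ae_eq_Ioc, hmean]
  gcongr
end
end
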